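/- arXiv:2001.11472 — 2 statements merged into one kernel-verified Lean document; each statement's English description precedes it below -/
import Mathlib

section
/- Let X be a proper, connected, geodesically complete CAT(0) space. Then for every admissible quadruple (ξ1,ξ2,ξ3,ξ4) ∈ ∂X⁴ and any two base points x, y ∈ X one has cr_x(ξ1,ξ2,ξ3,ξ4) = cr_y(ξ1,ξ2,ξ3,ξ4); hence the cross ratio cr := cr_x is a well-defined function from the set of admissible quadruples to [0,∞] that is independent of the choice of base point. -/
/-!
The proof rests on the base change formula
`(ξ|η)_y = (ξ|η)_x + (B(x,y,ξ) + B(x,y,η)) / 2`,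
which turns into `ρ_y(ξ,η) = ρ_x(ξ,η) u(ξ) u(η)` with `u(ξ) = exp (-B(x,y,ξ)/2) > 0`. In the cross
ratio each of the four points occurs once above and once below the fraction bar, so the factors
`u` cancel, also when some of the `ρ`'s vanish.

The formula follows from two inequalities. Write `γ`, `γ'` for the rays from `x`, `y` towards `ξ`.

* `(ξ|η)_y ≤ (ξ|η)_x + (B(x,y,ξ) + B(x,y,η)) / 2` (`gromov_le`): comparing the triangle
  `γ(T), y, γ'(T)` with a Euclidean one shows that `d(γ(T), γ'(r)) ≤ d(γ(T), y) - r + ε` for large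
  `T` (`eventually_dist_le`), and the claim is then a triangle inequality.
* `B(x,y,ξ) + B(y,x,ξ) ≤ 0` (`busemann_add_le`): this is the quadrilateral inequality for
  `x, y, γ'(t), γ(t)`.

Using the first inequality for `(x,y)` and `(y,x)` and adding the second one forces equality.

The ray from a given base point towards a given boundary point exists (`exists_ray`) as a limit,
along an ultrafilter, of the geodesic segments from the base point to the points `γ(n)`.
-/

noncomputable section

open Filter Topology Set Classical
open scoped ENNReal NNReal

namespace Paper

variable {X : Type*} [MetricSpace X]

/-- A geodesic ray: a unit-speed isometric embedding of `[0, ∞)` (only the values for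
nonnegative times matter). -/
def IsGeodesicRay (γ : ℝ → X) : Prop :=
  ∀ s t : ℝ, 0 ≤ s → 0 ≤ t → dist (γ s) (γ t) = |s - t|

/-- A bi-infinite geodesic: a unit-speed isometric embedding of `ℝ`. -/
def IsGeodesicLine (γ : ℝ → X) : Prop :=
  ∀ s t : ℝ, dist (γ s) (γ t) = |s - t|

theorem IsGeodesicLine.ray {γ : ℝ → X} (h : IsGeodesicLine γ) : IsGeodesicRay γ :=
  fun s t _ _ => h s t

theorem IsGeodesicLine.rayNeg {γ : ℝ → X} (h : IsGeodesicLine γ) :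
    IsGeodesicRay fun t => γ (-t) := by
  intro s t _ _
  show dist (γ (-s)) (γ (-t)) = |s - t|
  rw [h (-s) (-t), neg_sub_neg, abs_sub_comm]

/-- A geodesic metric space: any two points are joined by a geodesic segment. -/
def GeodesicSpace (X : Type*) [MetricSpace X] : Prop :=
  ∀ x y : X, ∃ γ : ℝ → X, γ 0 = x ∧ γ (dist x y) = y ∧
    ∀ s ∈ Set.Icc (0 : ℝ) (dist x y), ∀ t ∈ Set.Icc (0 : ℝ) (dist x y),
      dist (γ s) (γ t) = |s - t|

/-- CAT(0) space: a geodesic space satisfying the CN (Bruhat–Tits) inequality. -/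
def CAT0Space (X : Type*) [MetricSpace X] : Prop :=
  GeodesicSpace X ∧
    ∀ x y z m : X, dist y m = dist y z / 2 → dist m z = dist y z / 2 →
      dist x m ^ 2 ≤ dist x y ^ 2 / 2 + dist x z ^ 2 / 2 - dist y z ^ 2 / 4

/-- Geodesic completeness: every geodesic segment extends to a bi-infinite geodesic line. -/
def GeodesicallyComplete (X : Type*) [MetricSpace X] : Prop :=
  ∀ (γ : ℝ → X) (a b : ℝ), a < b →
    (∀ s ∈ Set.Icc a b, ∀ t ∈ Set.Icc a b, dist (γ s) (γ t) = |s - t|) →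
    ∃ δ : ℝ → X, IsGeodesicLine δ ∧ ∀ t ∈ Set.Icc a b, δ t = γ t

/-- The space of geodesic rays in `X`. -/
def RaySpace (X : Type*) [MetricSpace X] : Type _ := {γ : ℝ → X // IsGeodesicRay γ}

/-- Rays are asymptotic if they stay at bounded distance from each other. -/
instance raySetoid (X : Type*) [MetricSpace X] : Setoid (RaySpace X) where
  r γ γ' := ∃ C : ℝ, ∀ t : ℝ, 0 ≤ t → dist (γ.1 t) (γ'.1 t) ≤ C
  iseqv := by
    constructor
    · intro γ; exact ⟨0, fun t _ => by simp⟩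
    · rintro γ γ' ⟨C, hC⟩
      exact ⟨C, fun t ht => by rw [dist_comm]; exact hC t ht⟩
    · rintro γ γ' γ'' ⟨C, hC⟩ ⟨D, hD⟩
      exact ⟨C + D, fun t ht => (dist_triangle (γ.1 t) (γ'.1 t) (γ''.1 t)).trans
        (add_le_add (hC t ht) (hD t ht))⟩

/-- The boundary at infinity: asymptoticity classes of geodesic rays. -/
def Boundary (X : Type*) [MetricSpace X] : Type _ := Quotient (raySetoid X)

/-- The point at infinity represented by a geodesic ray. -/
def boundaryPoint {γ : ℝ → X} (h : IsGeodesicRay γ) : Boundary X :=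
  Quotient.mk (raySetoid X) ⟨γ, h⟩

/-- The geodesic ray issuing from `x` representing `ξ` (chosen; in a proper geodesically
complete CAT(0) space it exists and is unique). -/
def rayFrom (x : X) (ξ : Boundary X) : ℝ → X :=
  if h : ∃ γ : ℝ → X, γ 0 = x ∧ ∃ hγ : IsGeodesicRay γ, boundaryPoint hγ = ξ
  then h.choose else fun _ => x

/-- The Gromov product `(ξ|η)_x ∈ [0,∞]`, defined as the (monotone) limit
`lim_{t→∞} (t - d(ξ_x(t), η_x(t))/2)`, i.e. the supremum over nonnegative times. -/
def gromov (x : X) (ξ η : Boundary X) : EReal :=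
  ⨆ (t : ℝ) (_ : 0 ≤ t),
    ((t - dist (rayFrom x ξ t) (rayFrom x η t) / 2 : ℝ) : EReal)

/-- `ρ_x(ξ,η) = e^{-(ξ|η)_x}`, with `e^{-∞} = 0`. -/
def rho (x : X) (ξ η : Boundary X) : ℝ :=
  if gromov x ξ η = ⊤ then 0 else Real.exp (-(gromov x ξ η).toReal)

/-- A pair of boundary points is algebraically visible w.r.t. the base point `x` if their
Gromov product is finite. -/
def AVisible (x : X) (ξ η : Boundary X) : Prop := gromov x ξ η ≠ ⊤

/-- Algebraic visibility (with respect to every base point; this is base-point independent). -/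
def AVis {X : Type*} [MetricSpace X] (ξ η : Boundary X) : Prop :=
  ∀ x : X, gromov x ξ η ≠ ⊤

/-- The cross ratio with base point `x`, valued in `[0,∞]`. -/
def crX (x : X) (ξ₁ ξ₂ ξ₃ ξ₄ : Boundary X) : ℝ≥0∞ :=
  (ENNReal.ofReal (rho x ξ₁ ξ₂) * ENNReal.ofReal (rho x ξ₃ ξ₄)) /
    (ENNReal.ofReal (rho x ξ₁ ξ₃) * ENNReal.ofReal (rho x ξ₂ ξ₄))

/-- A quadruple is admissible if among any three of its members, at least two of the three
pairs are algebraically visible. -/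
def AdmissibleQuad (x : X) (q : Fin 4 → Boundary X) : Prop :=
  ∀ i j k : Fin 4, i ≠ j → j ≠ k → i ≠ k →
    ((AVisible x (q i) (q j) ∧ AVisible x (q i) (q k)) ∨
     (AVisible x (q i) (q j) ∧ AVisible x (q j) (q k)) ∨
     (AVisible x (q i) (q k) ∧ AVisible x (q j) (q k)))

/-- The Busemann function `B(x,y,ξ) = lim_{t→∞} (d(y,ξ_x(t)) - d(x,ξ_x(t)))`;
the function is non-increasing and bounded, so the limit is the infimum. -/
def busemann (x y : X) (ξ : Boundary X) : ℝ :=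
  ⨅ t : {t : ℝ // 0 ≤ t}, (dist y (rayFrom x ξ t.1) - dist x (rayFrom x ξ t.1))

/-- The visual topology on the boundary at infinity, generated by the sets
`U_{R,ε,x}(ξ) = {η | d(η_x(R), ξ_x(R)) < ε}`. -/
def visualTopology (X : Type*) [MetricSpace X] : TopologicalSpace (Boundary X) :=
  TopologicalSpace.generateFrom
    { U | ∃ (x : X) (ξ : Boundary X) (R ε : ℝ), 0 < ε ∧
        U = { η : Boundary X | dist (rayFrom x η R) (rayFrom x ξ R) < ε } }

/-- A pair of boundary points is visible if some bi-infinite geodesic has them as its two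
endpoints at infinity. -/
def VisiblePair (ξ η : Boundary X) : Prop :=
  ∃ (γ : ℝ → X) (h : IsGeodesicLine γ),
    boundaryPoint h.rayNeg = ξ ∧ boundaryPoint h.ray = η

/-- A geodesic bounds a flat half-plane if there is an isometric embedding of the Euclidean
half-plane whose boundary line is the given geodesic. -/
def BoundsFlatHalfPlane (γ : ℝ → X) : Prop :=
  ∃ φ : ℝ × ℝ → X,
    (∀ p q : ℝ × ℝ, 0 ≤ p.2 → 0 ≤ q.2 →
      dist (φ p) (φ q) = Real.sqrt ((p.1 - q.1) ^ 2 + (p.2 - q.2) ^ 2)) ∧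
    ∀ t : ℝ, φ (t, 0) = γ t

/-- Two boundary points are connected by a rank 1 geodesic. -/
def RankOneConnected (ξ η : Boundary X) : Prop :=
  ∃ (γ : ℝ → X) (h : IsGeodesicLine γ), ¬ BoundsFlatHalfPlane γ ∧
    boundaryPoint h.rayNeg = ξ ∧ boundaryPoint h.ray = η

/-- `ξ` is in a rank 1 hinge. -/
def RankOneHinge (ξ : Boundary X) : Prop :=
  ∃ η ζ : Boundary X, AVis η ζ ∧ RankOneConnected ξ η ∧ RankOneConnected ξ ζ

/-- The boundary of `X` satisfies the 4-visibility condition (4v). -/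
def FourVisBoundary (X : Type*) [MetricSpace X] : Prop :=
  ∀ ξ₁ ξ₂ ξ₃ ξ₄ : Boundary X, ∃ η : Boundary X,
    AVis ξ₁ η ∧ AVis ξ₂ η ∧ AVis ξ₃ η ∧ AVis ξ₄ η

/-- `ρ_x` as an `ℝ≥0∞`-valued kernel. -/
def rhoE (x : X) (ξ η : Boundary X) : ℝ≥0∞ := ENNReal.ofReal (rho x ξ η)

end Paper

namespace Paper

section

variable {X : Type*} [MetricSpace X]

/-! ### Comparison inequalities -/

/-- Stewart's inequality: the CN inequality at an arbitrary point of a geodesic segment. -/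
lemma cn_segment (hcat : CAT0Space X) {σ : ℝ → X} {L : ℝ} (hL : 0 < L)
    (hσ : ∀ s ∈ Icc (0 : ℝ) L, ∀ t ∈ Icc (0 : ℝ) L, dist (σ s) (σ t) = |s - t|)
    (a : X) {s : ℝ} (hs : s ∈ Icc (0 : ℝ) L) :
    dist a (σ s) ^ 2 ≤
      (1 - s / L) * dist a (σ 0) ^ 2 + s / L * dist a (σ L) ^ 2 - s * (L - s) := by
  set g : ℝ → ℝ := fun s => dist a (σ s) ^ 2 -
    ((1 - s / L) * dist a (σ 0) ^ 2 + s / L * dist a (σ L) ^ 2 - s * (L - s)) with hg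
  have hcσ : ContinuousOn σ (Icc 0 L) := by
    have : LipschitzOnWith 1 σ (Icc 0 L) := by
      refine LipschitzOnWith.of_dist_le_mul fun u hu v hv => ?_
      rw [hσ u hu v hv, Real.dist_eq]
      simp
    exact this.continuousOn
  have hc : ContinuousOn g (Icc 0 L) := by
    refine ContinuousOn.sub (((continuous_const.dist continuous_id).comp_continuousOn hcσ).pow 2)
      (Continuous.continuousOn ?_)
    fun_prop
  have hg0 : g 0 = 0 := by simp [hg]
  have hgL : g L = 0 := by simp [hg, hL.ne']
  -- `g` is midpoint convex, because the quadratic terms of the CN inequality match exactly.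
  have hmid : ∀ u v, u ∈ Icc (0 : ℝ) L → v ∈ Icc (0 : ℝ) L → u ≤ v →
      g ((u + v) / 2) ≤ g u / 2 + g v / 2 := by
    intro u v hu hv huv
    have hm : (u + v) / 2 ∈ Icc (0 : ℝ) L := ⟨by linarith [hu.1, hv.1], by linarith [hu.2, hv.2]⟩
    have huv' : dist (σ u) (σ v) = v - u := by
      rw [hσ u hu v hv, abs_sub_comm, abs_of_nonneg (by linarith)]
    have h := hcat.2 a (σ u) (σ v) (σ ((u + v) / 2))
      (by rw [huv', hσ u hu _ hm, abs_sub_comm, abs_of_nonneg (by linarith)]; ring)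
      (by rw [huv', hσ _ hm v hv, abs_sub_comm, abs_of_nonneg (by linarith)]; ring)
    rw [huv'] at h
    simp only [hg]
    have e : ((u + v) / 2) / L = (u / L) / 2 + (v / L) / 2 := by ring
    rw [e]
    nlinarith [h]
  obtain ⟨t₀, ht₀, hmax⟩ := isCompact_Icc.exists_isMaxOn ⟨0, left_mem_Icc.2 hL.le⟩ hc
  -- A positive maximum would be the midpoint of an endpoint, where `g = 0`, and another point.
  have hM : g t₀ ≤ 0 := by
    by_contra! hpos
    rcases le_total t₀ (L / 2) with h | h
    · have h2 : 2 * t₀ ∈ Icc (0 : ℝ) L := ⟨by linarith [ht₀.1], by linarith⟩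
      have h3 := hmid 0 (2 * t₀) (left_mem_Icc.2 hL.le) h2 h2.1
      rw [show (0 + 2 * t₀) / 2 = t₀ by ring, hg0] at h3
      have h4 : g (2 * t₀) ≤ g t₀ := hmax h2
      linarith
    · have h2 : 2 * t₀ - L ∈ Icc (0 : ℝ) L := ⟨by linarith, by linarith [ht₀.2]⟩
      have h3 := hmid (2 * t₀ - L) L h2 (right_mem_Icc.2 hL.le) h2.2
      rw [show (2 * t₀ - L + L) / 2 = t₀ by ring, hgL] at h3
      have h4 : g (2 * t₀ - L) ≤ g t₀ := hmax h2
      linarith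
  have h5 : g s ≤ g t₀ := hmax hs
  have h6 : g s ≤ 0 := h5.trans hM
  simp only [hg] at h6
  linarith

lemma IsGeodesicRay.segment {γ : ℝ → X} (h : IsGeodesicRay γ) (L : ℝ) :
    ∀ s ∈ Icc (0 : ℝ) L, ∀ t ∈ Icc (0 : ℝ) L, dist (γ s) (γ t) = |s - t| :=
  fun s hs t ht => h s t hs.1 ht.1

lemma IsGeodesicRay.dist_zero {γ : ℝ → X} (h : IsGeodesicRay γ) {t : ℝ} (ht : 0 ≤ t) :
    dist (γ 0) (γ t) = t := by
  rw [h 0 t le_rfl ht, zero_sub, abs_neg, abs_of_nonneg ht]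

/-- The sum of the squared diagonals of a quadrilateral is at most the sum of its squared sides;
it follows from the CN inequality at the midpoint of one diagonal. -/
lemma quadrilateral (hcat : CAT0Space X) (x y p q : X) :
    dist y q ^ 2 + dist x p ^ 2 ≤
      dist x y ^ 2 + dist y p ^ 2 + dist p q ^ 2 + dist q x ^ 2 := by
  obtain ⟨σ, h0, h1, hσ⟩ := hcat.1 x p
  have hd : 0 ≤ dist x p := dist_nonneg
  have hm : dist x p / 2 ∈ Icc (0 : ℝ) (dist x p) := ⟨by linarith, by linarith⟩
  have e1 : dist x (σ (dist x p / 2)) = dist x p / 2 := by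
    conv_lhs => rw [← h0]
    rw [hσ 0 (left_mem_Icc.2 hd) _ (by rwa [h0]), h0, zero_sub, abs_neg, abs_of_nonneg hm.1]
  have e2 : dist (σ (dist x p / 2)) p = dist x p / 2 := by
    have := hσ _ hm _ (right_mem_Icc.2 hd)
    rw [h1] at this
    rw [this, abs_sub_comm, abs_of_nonneg (by linarith)]
    ring
  set m := σ (dist x p / 2)
  have a1 := hcat.2 y x p m e1 e2
  have a2 := hcat.2 q x p m e1 e2
  have a3 := dist_triangle y m q
  rw [dist_comm m q] at a3
  have a4 : dist y q ^ 2 ≤ (dist y m + dist q m) ^ 2 := pow_le_pow_left₀ dist_nonneg a3 2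
  rw [dist_comm y x] at a1
  rw [dist_comm q p] at a2
  nlinarith [sq_nonneg (dist y m - dist q m)]

/-- A segment `σ` ending on a ray `γ` stays within `2 d(σ(0), γ(0))` of the ray, both being
parametrised by arc length. -/
lemma dist_segment_ray_le (hcat : CAT0Space X) {γ σ : ℝ → X} (hγ : IsGeodesicRay γ) {n L : ℝ}
    (hn : 0 < n) (hL : 0 < L)
    (hσ : ∀ s ∈ Icc (0 : ℝ) L, ∀ t ∈ Icc (0 : ℝ) L, dist (σ s) (σ t) = |s - t|)
    (hend : σ L = γ n) {s : ℝ} (hs : 0 ≤ s) (hsn : s ≤ n) (hsL : s ≤ L) :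
    dist (σ s) (γ s) ≤ 2 * dist (σ 0) (γ 0) := by
  -- Points dividing the two sides of the triangle in the same ratio `l` are at distance at most
  -- `(1 - l) d(σ 0, γ 0)`.
  obtain ⟨l, hl⟩ : ∃ l, l = s / n := ⟨_, rfl⟩
  have hsl : s = l * n := by rw [hl]; field_simp
  have hl0 : 0 ≤ l := by rw [hl]; positivity
  have hl1 : l ≤ 1 := by rw [hl]; exact (div_le_one hn).2 hsn
  set C := dist (σ 0) (γ 0) with hC
  have hC0 : 0 ≤ C := dist_nonneg
  have hlL : l * L ∈ Icc (0 : ℝ) L := ⟨by positivity, by nlinarith⟩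
  have i1 := cn_segment hcat hL hσ (γ s) hlL
  have i2 := cn_segment hcat hn (hγ.segment n) (σ 0) (s := s) ⟨hs, hsn⟩
  rw [hend, hγ s n hs hn.le, abs_sub_comm, abs_of_nonneg (by linarith),
    mul_div_assoc, div_self hL.ne', mul_one] at i1
  have hLe : dist (σ 0) (γ n) = L := by
    rw [← hend, hσ 0 (left_mem_Icc.2 hL.le) L (right_mem_Icc.2 hL.le), zero_sub, abs_neg,
      abs_of_pos hL]
  rw [← hl, hLe, ← hC] at i2
  rw [dist_comm (γ s) (σ 0)] at i1
  have i3 : dist (γ s) (σ (l * L)) ^ 2 ≤ C ^ 2 := by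
    have i4 := mul_le_mul_of_nonneg_left i2 (sub_nonneg.2 hl1)
    have i5 : dist (γ s) (σ (l * L)) ^ 2 ≤ (1 - l) ^ 2 * C ^ 2 := by
      rw [hsl] at i1 i4 ⊢
      linarith
    have i6 : (1 - l) ^ 2 ≤ 1 := by nlinarith
    nlinarith [sq_nonneg C]
  have i7 : dist (γ s) (σ (l * L)) ≤ C := abs_le_of_sq_le_sq' i3 hC0 |>.2
  have i8 : dist (σ s) (σ (l * L)) ≤ C := by
    rw [hσ s ⟨hs, hsL⟩ _ hlL, hsl, ← mul_sub, abs_mul, abs_of_nonneg hl0]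
    have : |n - L| ≤ C := by
      have t1 := dist_triangle (γ 0) (σ 0) (γ n)
      have t2 := dist_triangle (σ 0) (γ 0) (γ n)
      rw [hLe, hγ.dist_zero hn.le] at t1 t2
      rw [dist_comm (γ 0) (σ 0)] at t1
      rw [abs_le]
      constructor <;> linarith
    calc l * |n - L| ≤ 1 * C := by gcongr
      _ = C := one_mul C
  have := dist_triangle (σ s) (σ (l * L)) (γ s)
  rw [dist_comm (σ (l * L)) (γ s)] at this
  linarith

/-! ### Rays with prescribed origin and endpoint -/

lemma exists_ray [ProperSpace X] (hcat : CAT0Space X) {γ : ℝ → X} (hγ : IsGeodesicRay γ) (y : X) :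
    ∃ γ' : ℝ → X, γ' 0 = y ∧ IsGeodesicRay γ' ∧
      ∃ C : ℝ, ∀ t : ℝ, 0 ≤ t → dist (γ' t) (γ t) ≤ C := by
  choose σ h0 h1 hσ using fun n : ℕ => hcat.1 y (γ n)
  have hlen : ∀ s : ℝ, ∀ᶠ n : ℕ in atTop, s ≤ dist y (γ n) := by
    intro s
    filter_upwards [eventually_ge_atTop ⌈s + dist (γ 0) y⌉₊] with n hn
    have h2 : s + dist (γ 0) y ≤ n := Nat.ceil_le.1 hn
    have h3 := dist_triangle (γ 0) y (γ n)
    rw [hγ.dist_zero (Nat.cast_nonneg n)] at h3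
    linarith
  set U : Ultrafilter ℕ := Ultrafilter.of atTop
  have hU : (U : Filter ℕ) ≤ atTop := Ultrafilter.of_le _
  have hlim : ∀ s : ℝ, 0 ≤ s → ∃ p : X, Tendsto (fun n => σ n s) U (𝓝 p) := by
    intro s hs
    have hmem : ∀ᶠ n in (U : Filter ℕ), σ n s ∈ Metric.closedBall y s := by
      filter_upwards [hU (hlen s)] with n hn
      have := hσ n s ⟨hs, hn⟩ 0 ⟨le_rfl, dist_nonneg⟩
      rw [h0, sub_zero, abs_of_nonneg hs] at this
      exact this.le
    obtain ⟨p, -, hp⟩ := (isCompact_closedBall y s).ultrafilter_le_nhds'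
      (U.map fun n => σ n s) hmem
    exact ⟨p, hp⟩
  have : Nonempty X := ⟨y⟩
  choose! γ' hγ' using hlim
  refine ⟨γ', ?_, ?_, 2 * dist y (γ 0), ?_⟩
  · refine tendsto_nhds_unique (hγ' 0 le_rfl) ?_
    simp only [h0]
    exact tendsto_const_nhds
  · intro s t hs ht
    refine tendsto_nhds_unique ((hγ' s hs).dist (hγ' t ht)) (tendsto_const_nhds.congr' ?_)
    filter_upwards [hU (hlen s), hU (hlen t)] with n hn hn'
    exact (hσ n s ⟨hs, hn⟩ t ⟨ht, hn'⟩).symm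
  · intro t ht
    refine le_of_tendsto ((hγ' t ht).dist tendsto_const_nhds) ?_
    filter_upwards [hU (hlen t), hU (hlen 1), hU (eventually_ge_atTop ⌈t⌉₊),
      hU (eventually_ge_atTop 1)] with n hn hn' hn1 hn2
    have := dist_segment_ray_le hcat hγ (n := n) (by exact_mod_cast hn2) (by linarith)
      (hσ n) (h1 n) ht (Nat.ceil_le.1 hn1) hn
    rwa [h0] at this

lemma rayFrom_spec [ProperSpace X] (hcat : CAT0Space X) (x : X) (ξ : Boundary X) :
    rayFrom x ξ 0 = x ∧ ∃ h : IsGeodesicRay (rayFrom x ξ), boundaryPoint h = ξ := by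
  have hex : ∃ γ : ℝ → X, γ 0 = x ∧ ∃ hγ : IsGeodesicRay γ, boundaryPoint hγ = ξ := by
    induction ξ using Quotient.inductionOn with
    | h r =>
      obtain ⟨γ', e, hr, hC⟩ := exists_ray hcat r.2 x
      exact ⟨γ', e, hr, Quotient.sound hC⟩
  have e : rayFrom x ξ = hex.choose := dif_pos hex
  rw [e]
  exact hex.choose_spec

lemma rayFrom_zero [ProperSpace X] (hcat : CAT0Space X) (x : X) (ξ : Boundary X) :
    rayFrom x ξ 0 = x := (rayFrom_spec hcat x ξ).1

lemma rayFrom_ray [ProperSpace X] (hcat : CAT0Space X) (x : X) (ξ : Boundary X) :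
    IsGeodesicRay (rayFrom x ξ) := (rayFrom_spec hcat x ξ).2.1

lemma dist_rayFrom [ProperSpace X] (hcat : CAT0Space X) (x : X) (ξ : Boundary X) {t : ℝ}
    (ht : 0 ≤ t) : dist x (rayFrom x ξ t) = t := by
  have := (rayFrom_ray hcat x ξ).dist_zero ht
  rwa [rayFrom_zero hcat] at this

lemma rayFrom_asymptotic [ProperSpace X] (hcat : CAT0Space X) (x y : X) (ξ : Boundary X) :
    ∃ C : ℝ, ∀ t : ℝ, 0 ≤ t → dist (rayFrom x ξ t) (rayFrom y ξ t) ≤ C := by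
  obtain ⟨hx, ex⟩ := (rayFrom_spec hcat x ξ).2
  obtain ⟨hy, ey⟩ := (rayFrom_spec hcat y ξ).2
  exact Quotient.exact (ex.trans ey.symm)

/-! ### Busemann functions -/

lemma busemann_le [ProperSpace X] (hcat : CAT0Space X) (x y : X) (ξ : Boundary X) {t : ℝ}
    (ht : 0 ≤ t) : busemann x y ξ ≤ dist y (rayFrom x ξ t) - t := by
  have hb : BddBelow (range fun t : {t : ℝ // 0 ≤ t} =>
      dist y (rayFrom x ξ t.1) - dist x (rayFrom x ξ t.1)) := by
    refine ⟨-dist x y, ?_⟩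
    rintro _ ⟨s, rfl⟩
    have := dist_triangle x y (rayFrom x ξ s.1)
    dsimp only
    linarith
  have h := ciInf_le hb ⟨t, ht⟩
  dsimp only at h
  rw [dist_rayFrom hcat x ξ ht] at h
  exact h

/-- The infimum defining the Busemann function is a limit, by monotonicity. -/
lemma eventually_le_busemann [ProperSpace X] (hcat : CAT0Space X) (x y : X) (ξ : Boundary X)
    {ε : ℝ} (hε : 0 < ε) :
    ∀ᶠ T : ℝ in atTop, dist y (rayFrom x ξ T) - T ≤ busemann x y ξ + ε := by
  have : Nonempty {t : ℝ // 0 ≤ t} := ⟨⟨0, le_rfl⟩⟩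
  obtain ⟨⟨s, hs⟩, h⟩ := exists_lt_of_ciInf_lt (lt_add_of_pos_right (busemann x y ξ) hε)
  dsimp only at h
  rw [dist_rayFrom hcat x ξ hs] at h
  filter_upwards [eventually_ge_atTop s] with T hT
  have h1 := dist_triangle y (rayFrom x ξ s) (rayFrom x ξ T)
  rw [rayFrom_ray hcat x ξ s T hs (hs.trans hT), abs_sub_comm, abs_of_nonneg (by linarith)] at h1
  linarith

lemma busemann_add_le [ProperSpace X] (hcat : CAT0Space X) (x y : X) (ξ : Boundary X) :
    busemann x y ξ + busemann y x ξ ≤ 0 := by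
  obtain ⟨C, hC⟩ := rayFrom_asymptotic hcat x y ξ
  set K := dist x y ^ 2 + C ^ 2
  have key : ∀ t : ℝ, 0 < t → (busemann x y ξ + busemann y x ξ) * (2 * t) ≤ K := by
    intro t ht
    have h1 := busemann_le hcat x y ξ ht.le
    have h2 := busemann_le hcat y x ξ ht.le
    have h3 := quadrilateral hcat x y (rayFrom y ξ t) (rayFrom x ξ t)
    rw [dist_rayFrom hcat y ξ ht.le, dist_comm (rayFrom x ξ t) x,
      dist_rayFrom hcat x ξ ht.le, dist_comm (rayFrom y ξ t) (rayFrom x ξ t)] at h3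
    have h4 : dist (rayFrom x ξ t) (rayFrom y ξ t) ^ 2 ≤ C ^ 2 :=
      pow_le_pow_left₀ dist_nonneg (hC t ht.le) 2
    -- `2 t (A - t) ≤ A² - t²` for each of the two diagonals `A`
    nlinarith [sq_nonneg (dist y (rayFrom x ξ t) - t), sq_nonneg (dist x (rayFrom y ξ t) - t)]
  by_contra! hpos
  have hK : 0 ≤ K := by positivity
  have := key ((K + 1) / (busemann x y ξ + busemann y x ξ)) (by positivity)
  have e : (busemann x y ξ + busemann y x ξ) *
      (2 * ((K + 1) / (busemann x y ξ + busemann y x ξ))) = 2 * (K + 1) := by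
    field_simp
  linarith

/-- A ray towards `ξ` is a gradient ray of the Busemann functions centred at `ξ`: seen from far
out on the ray from `x`, the distance drops by `r` when moving from `y` to `rayFrom y ξ r`. -/
lemma eventually_dist_le [ProperSpace X] (hcat : CAT0Space X) (x y : X) (ξ : Boundary X)
    {r ε : ℝ} (hr : 0 ≤ r) (hε : 0 < ε) :
    ∀ᶠ T : ℝ in atTop,
      dist (rayFrom x ξ T) (rayFrom y ξ r) ≤ dist y (rayFrom x ξ T) - r + ε := by
  obtain ⟨C, hC⟩ := rayFrom_asymptotic hcat x y ξ
  filter_upwards [eventually_ge_atTop (r + dist x y + 1),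
    eventually_ge_atTop (r * C ^ 2 / (2 * ε))] with T hT1 hT2
  have hxy : 0 ≤ dist x y := dist_nonneg
  have hT : 0 < T := by linarith
  have h1 := cn_segment hcat hT ((rayFrom_ray hcat y ξ).segment T) (rayFrom x ξ T) (s := r)
    ⟨hr, by linarith⟩
  rw [rayFrom_zero hcat, dist_comm (rayFrom x ξ T) y] at h1
  have h2 : dist (rayFrom x ξ T) (rayFrom y ξ T) ^ 2 ≤ C ^ 2 :=
    pow_le_pow_left₀ dist_nonneg (hC T hT.le) 2
  have h3 := dist_triangle x y (rayFrom x ξ T)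
  rw [dist_rayFrom hcat x ξ hT.le] at h3
  set D := dist y (rayFrom x ξ T)
  have h4 : r / T * C ^ 2 ≤ 2 * ε := by
    rw [div_le_iff₀ (by positivity)] at hT2
    rw [div_mul_eq_mul_div, div_le_iff₀ hT]
    linarith
  have hl : 0 ≤ r / T := by positivity
  have h5 : r / T * dist (rayFrom x ξ T) (rayFrom y ξ T) ^ 2 ≤ 2 * ε :=
    (mul_le_mul_of_nonneg_left h2 hl).trans h4
  have h6 : (1 - r / T) * D ^ 2 - r * (T - r) = (D - r) ^ 2 - r / T * (D - T) ^ 2 := by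
    field_simp
    ring
  have h7 : 0 ≤ r / T * (D - T) ^ 2 := by positivity
  refine abs_le_of_sq_le_sq' (?_ : _ ≤ (D - r + ε) ^ 2) (by linarith) |>.2
  nlinarith [sq_nonneg ε]

/-! ### Change of base point -/

lemma gromov_ne_bot (x : X) (ξ η : Boundary X) : gromov x ξ η ≠ ⊥ := by
  have h : ((0 - dist (rayFrom x ξ 0) (rayFrom x η 0) / 2 : ℝ) : EReal) ≤ gromov x ξ η :=
    le_iSup₂_of_le (0 : ℝ) le_rfl le_rfl
  intro e
  rw [e, le_bot_iff] at h
  exact EReal.coe_ne_bot _ h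

lemma gromov_le [ProperSpace X] (hcat : CAT0Space X) (x y : X) (ξ η : Boundary X) {G : ℝ}
    (hG : gromov x ξ η ≤ (G : EReal)) :
    gromov y ξ η ≤ ((G + (busemann x y ξ + busemann x y η) / 2 : ℝ) : EReal) := by
  refine iSup₂_le fun r hr => EReal.coe_le_coe_iff.2 (le_of_forall_pos_le_add fun ε hε => ?_)
  have hε2 : 0 < ε / 2 := by linarith
  obtain ⟨T, hT, a1, a2, b1, b2⟩ := ((eventually_ge_atTop (0 : ℝ)).and <|
    (eventually_dist_le hcat x y ξ hr hε2).and <| (eventually_dist_le hcat x y η hr hε2).and <|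
    (eventually_le_busemann hcat x y ξ hε2).and (eventually_le_busemann hcat x y η hε2)).exists
  have hGT : T - dist (rayFrom x ξ T) (rayFrom x η T) / 2 ≤ G :=
    EReal.coe_le_coe_iff.1 ((le_iSup₂_of_le T hT le_rfl).trans hG)
  have t := dist_triangle4 (rayFrom x ξ T) (rayFrom y ξ r) (rayFrom y η r) (rayFrom x η T)
  rw [dist_comm (rayFrom y η r) (rayFrom x η T)] at t
  linarith

lemma gromov_eq_top [ProperSpace X] (hcat : CAT0Space X) (x y : X) (ξ η : Boundary X)
    (h : gromov y ξ η = ⊤) : gromov x ξ η = ⊤ := by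
  by_contra hne
  have := gromov_le hcat x y ξ η
    (EReal.coe_toReal hne (gromov_ne_bot x ξ η)).ge
  rw [h, top_le_iff] at this
  exact EReal.coe_ne_top _ this

lemma gromov_toReal_le [ProperSpace X] (hcat : CAT0Space X) (x y : X) (ξ η : Boundary X)
    (hx : gromov x ξ η ≠ ⊤) : (gromov y ξ η).toReal ≤
      (gromov x ξ η).toReal + (busemann x y ξ + busemann x y η) / 2 := by
  have h := gromov_le hcat x y ξ η (EReal.coe_toReal hx (gromov_ne_bot x ξ η)).ge
  have hy : gromov y ξ η ≠ ⊤ := fun e => hx (gromov_eq_top hcat x y ξ η e)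
  rw [← EReal.coe_toReal hy (gromov_ne_bot y ξ η)] at h
  exact EReal.coe_le_coe_iff.1 h

lemma rho_change [ProperSpace X] (hcat : CAT0Space X) (x y : X) (ξ η : Boundary X) :
    rho y ξ η = rho x ξ η *
      (Real.exp (-(busemann x y ξ / 2)) * Real.exp (-(busemann x y η / 2))) := by
  unfold rho
  by_cases hx : gromov x ξ η = ⊤
  · rw [if_pos hx, if_pos (gromov_eq_top hcat y x ξ η hx), zero_mul]
  · have hy : gromov y ξ η ≠ ⊤ := fun e => hx (gromov_eq_top hcat x y ξ η e)
    rw [if_neg hx, if_neg hy, ← Real.exp_add, ← Real.exp_add]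
    congr 1
    linarith [gromov_toReal_le hcat x y ξ η hx, gromov_toReal_le hcat y x ξ η hy,
      busemann_add_le hcat x y ξ, busemann_add_le hcat x y η]

end

/-- In a proper, connected, geodesically complete CAT(0) space the cross
ratio of an admissible quadruple of boundary points does not depend on the base point:
`cr_x = cr_y` on all admissible quadruples, so `cr := cr_x` is well defined. -/
theorem statement0 (X : Type*) [MetricSpace X] [ProperSpace X] [ConnectedSpace X]
    (hcat : CAT0Space X) (hgc : GeodesicallyComplete X)
    (q : Fin 4 → Boundary X) (x y : X) (hadm : AdmissibleQuad x q) :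
    crX x (q 0) (q 1) (q 2) (q 3) = crX y (q 0) (q 1) (q 2) (q 3) := by
  unfold crX
  obtain ⟨u, hu⟩ : ∃ u : Boundary X → ℝ, u = fun ξ => Real.exp (-(busemann x y ξ / 2)) :=
    ⟨_, rfl⟩
  have hpos : ∀ ξ, 0 < u ξ := fun ξ => by rw [hu]; exact Real.exp_pos _
  have hrho : ∀ ξ η, ENNReal.ofReal (rho y ξ η) = ENNReal.ofReal (rho x ξ η) *
      (ENNReal.ofReal (u ξ) * ENNReal.ofReal (u η)) := by
    intro ξ η
    have h0 : 0 ≤ rho x ξ η := by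
      unfold rho
      split_ifs
      · exact le_rfl
      · exact (Real.exp_pos _).le
    rw [rho_change hcat x y ξ η, ENNReal.ofReal_mul h0, ENNReal.ofReal_mul (Real.exp_pos _).le, hu]
  set c := ENNReal.ofReal (u (q 0)) * ENNReal.ofReal (u (q 1)) *
    (ENNReal.ofReal (u (q 2)) * ENNReal.ofReal (u (q 3))) with hc
  have hc0 : c ≠ 0 := by
    simp only [hc, ne_eq, mul_eq_zero, ENNReal.ofReal_eq_zero, not_or, not_le, hpos, and_self]
  have hct : c ≠ ⊤ := by
    rw [hc]
    finiteness
  simp only [hrho]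
  rw [← ENNReal.mul_div_mul_right _ _ hc0 hct]
  congr 1 <;> rw [hc] <;> ring

end Paper
end
end

section
/- Let Z be a compact topological space and ρ, ρ' : Z × Z → [0,∞] Möbius equivalent functions with (Z,ρ) satisfying (4v), such that ρ and ρ' are continuous, ρ(z,z') ≤ 1 and ρ'(z,z') ≤ 1 for all z, z', and for every z ∈ Z there exist z̄, z̄' ∈ Z with ρ(z,z̄) = 1 and ρ'(z,z̄') = 1. Then max_{z∈Z} (∂ρ/∂ρ')(z) · min_{z∈Z} (∂ρ/∂ρ')(z) = 1. -/
/-!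
The hypothesis (4v) makes the derivative `D = ∂ρ/∂ρ'` independent of the visible triple used to
compute it (`Rquot_indep`, `mderiv_eq`), so near each point it is computed by one fixed pair
and is therefore continuous and finite; compactness bounds it. Computing `D z` and `D z'` with a
common third point `w` gives the geometric mean value theorem (`mderiv_mul`).

For `z` given, a point at `ρ'`-distance `1` from `z` has `D z * D z' ≤ 1`, and a point at
`ρ`-distance `1` has `D z * D z' ≥ 1`. Hence `D z * inf D ≤ 1` and `D z * sup D ≥ 1` for every `z`.
Since `sup D < ∞` by compactness, taking the supremum in the first inequality and the infimum in
the second gives both halves of `sup D * inf D = 1`.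
-/
noncomputable section

open Filter Topology Set Classical
open scoped ENNReal NNReal

namespace Paper

variable {Z : Type*}

/-- A symmetric `[0,∞]`-valued kernel vanishing on the diagonal. -/
def Kernel (ρ : Z → Z → ℝ≥0∞) : Prop :=
  (∀ a b : Z, ρ a b = ρ b a) ∧ ∀ a : Z, ρ a a = 0

/-- `(x,y,z)` is an algebraically visible triple w.r.t. `ρ`. -/
def VisTriple (ρ : Z → Z → ℝ≥0∞) (z x y : Z) : Prop :=
  ρ z x ≠ 0 ∧ ρ z y ≠ 0 ∧ ρ x y ≠ 0

/-- A quadruple is admissible w.r.t. `ρ` if it contains no chain of two consecutive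
non-visible pairs. -/
def Adm4 (ρ : Z → Z → ℝ≥0∞) (q : Fin 4 → Z) : Prop :=
  ∀ i j k : Fin 4, i ≠ j → j ≠ k → i ≠ k →
    ¬(ρ (q i) (q j) = 0 ∧ ρ (q j) (q k) = 0)

/-- The cross ratio determined by a kernel `ρ`. -/
def cr4 (ρ : Z → Z → ℝ≥0∞) (q : Fin 4 → Z) : ℝ≥0∞ :=
  ρ (q 0) (q 1) * ρ (q 2) (q 3) / (ρ (q 0) (q 2) * ρ (q 1) (q 3))

/-- Möbius equivalence: same algebraically visible pairs (equivalently, same admissible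
quadruples) and equal cross ratios on admissible quadruples. -/
def MobiusEquiv (ρ ρ' : Z → Z → ℝ≥0∞) : Prop :=
  (∀ a b : Z, ρ a b = 0 ↔ ρ' a b = 0) ∧
    ∀ q : Fin 4 → Z, Adm4 ρ q → cr4 ρ q = cr4 ρ' q

/-- The 4-visibility condition (4v). -/
def FourVis (ρ : Z → Z → ℝ≥0∞) : Prop :=
  ∀ z x x' y' : Z, ∃ w : Z, ρ w z ≠ 0 ∧ ρ w x ≠ 0 ∧ ρ w x' ≠ 0 ∧ ρ w y' ≠ 0

/-- The quotient `R_z(x,y) = ρ(z,x)ρ(z,y)ρ'(x,y) / (ρ(x,y)ρ'(z,x)ρ'(z,y))`. -/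
def Rquot (ρ ρ' : Z → Z → ℝ≥0∞) (z x y : Z) : ℝ≥0∞ :=
  ρ z x * ρ z y * ρ' x y / (ρ x y * ρ' z x * ρ' z y)

/-- The metric derivative `(∂ρ/∂ρ')(z)`, defined via a chosen algebraically visible
triple through `z` (independent of the choice, by `statement6`). -/
def mderiv (ρ ρ' : Z → Z → ℝ≥0∞) (z : Z) : ℝ≥0∞ :=
  if h : ∃ p : Z × Z, VisTriple ρ z p.1 p.2
  then Rquot ρ ρ' z h.choose.1 h.choose.2 else 0

/-- `z` is approximable w.r.t. `ρ`. -/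
def Approximable [TopologicalSpace Z] (ρ : Z → Z → ℝ≥0∞) (z : Z) : Prop :=
  ∃ u : ℕ → Z, Filter.Tendsto u Filter.atTop (nhds z) ∧ ∀ n : ℕ, ρ z (u n) ≠ 0

end Paper

namespace Paper

section Helpers

variable {Z : Type*} {ρ ρ' : Z → Z → ℝ≥0∞}

theorem Rquot_symm (hρ : Kernel ρ) (hρ' : Kernel ρ') (z x y : Z) :
    Rquot ρ ρ' z x y = Rquot ρ ρ' z y x := by
  unfold Rquot
  rw [hρ.1 x y, hρ'.1 x y, mul_comm (ρ z x), mul_right_comm (ρ y x)]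

theorem Rquot_ne_top (hm : MobiusEquiv ρ ρ') (hb : ∀ z z' : Z, ρ z z' ≤ 1)
    (hb' : ∀ z z' : Z, ρ' z z' ≤ 1) {z x y : Z} (h : VisTriple ρ z x y) :
    Rquot ρ ρ' z x y ≠ ⊤ := by
  have f : ∀ a b, ρ a b ≠ ⊤ := fun a b => ne_top_of_le_ne_top ENNReal.one_ne_top (hb a b)
  have f' : ∀ a b, ρ' a b ≠ ⊤ := fun a b => ne_top_of_le_ne_top ENNReal.one_ne_top (hb' a b)
  obtain ⟨h1, h2, h3⟩ := h
  refine ENNReal.div_ne_top (ENNReal.mul_ne_top (ENNReal.mul_ne_top (f _ _) (f _ _)) (f' _ _)) ?_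
  exact mul_ne_zero (mul_ne_zero h3 (mt (hm.1 _ _).2 h1)) (mt (hm.1 _ _).2 h2)

/-- Replacing one of the two auxiliary points does not change the quotient: the ratio of the two
quotients is the ratio of the `ρ`- and `ρ'`-cross ratios of `(z, y, w, x)`. -/
theorem Rquot_replace (hρ : Kernel ρ) (hρ' : Kernel ρ') (hm : MobiusEquiv ρ ρ')
    (hb : ∀ z z' : Z, ρ z z' ≤ 1) (hb' : ∀ z z' : Z, ρ' z z' ≤ 1) {z x y w : Z}
    (hy : VisTriple ρ z x y) (hw : VisTriple ρ z x w) :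
    Rquot ρ ρ' z x y = Rquot ρ ρ' z x w := by
  rw [← ENNReal.toReal_eq_toReal_iff' (Rquot_ne_top hm hb hb' hy) (Rquot_ne_top hm hb hb' hw)]
  obtain ⟨zx, zy, xy⟩ := hy
  obtain ⟨-, zw, xw⟩ := hw
  have nz : ∀ {a b}, ρ a b ≠ 0 → (ρ a b).toReal ≠ 0 := fun {a b} h =>
    ENNReal.toReal_ne_zero.2 ⟨h, ne_top_of_le_ne_top ENNReal.one_ne_top (hb a b)⟩
  have nz' : ∀ {a b}, ρ a b ≠ 0 → (ρ' a b).toReal ≠ 0 := fun {a b} h =>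
    ENNReal.toReal_ne_zero.2 ⟨mt (hm.1 _ _).2 h,
      ne_top_of_le_ne_top ENNReal.one_ne_top (hb' a b)⟩
  have yx : ρ y x ≠ 0 := by rwa [hρ.1]
  have wx : ρ w x ≠ 0 := by rwa [hρ.1]
  have xz : ρ x z ≠ 0 := by rwa [hρ.1]
  have yz : ρ y z ≠ 0 := by rwa [hρ.1]
  have wz : ρ w z ≠ 0 := by rwa [hρ.1]
  -- `{y, w}` is the only pair of the quadruple that may have `ρ = 0`.
  have adm : Adm4 ρ ![z, y, w, x] := by
    intro i j k hij hjk hik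
    fin_cases i <;> fin_cases j <;> fin_cases k <;> simp_all
  have key := congrArg ENNReal.toReal (hm.2 _ adm)
  simp only [cr4, ENNReal.toReal_div, ENNReal.toReal_mul, Matrix.cons_val] at key
  rw [hρ.1 w x, hρ.1 y x, hρ'.1 w x, hρ'.1 y x] at key
  simp only [Rquot, ENNReal.toReal_div, ENNReal.toReal_mul]
  have := nz zx
  have := nz zy
  have := nz xy
  have := nz zw
  have := nz xw
  have := nz' zx
  have := nz' zy
  have := nz' xy
  have := nz' zw
  have := nz' xw
  rw [div_eq_div_iff (by positivity) (by positivity)] at key ⊢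
  linear_combination ((ρ z x).toReal * (ρ' z x).toReal) * key

theorem Rquot_indep (hρ : Kernel ρ) (hρ' : Kernel ρ') (hm : MobiusEquiv ρ ρ') (h4 : FourVis ρ)
    (hb : ∀ z z' : Z, ρ z z' ≤ 1) (hb' : ∀ z z' : Z, ρ' z z' ≤ 1) {z x y x' y' : Z}
    (h : VisTriple ρ z x y) (h' : VisTriple ρ z x' y') :
    Rquot ρ ρ' z x y = Rquot ρ ρ' z x' y' := by
  obtain ⟨w, wz, wx, wx', -⟩ := h4 z x x' x'
  have zw : ρ z w ≠ 0 := by rwa [hρ.1]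
  have xw : ρ x w ≠ 0 := by rwa [hρ.1]
  have xw' : ρ x' w ≠ 0 := by rwa [hρ.1]
  rw [Rquot_replace hρ hρ' hm hb hb' h ⟨h.1, zw, xw⟩, Rquot_symm hρ hρ',
    Rquot_replace hρ hρ' hm hb hb' ⟨zw, h.1, wx⟩ ⟨zw, h'.1, wx'⟩, Rquot_symm hρ hρ',
    Rquot_replace hρ hρ' hm hb hb' ⟨h'.1, zw, xw'⟩ h']

theorem mderiv_eq (hρ : Kernel ρ) (hρ' : Kernel ρ') (hm : MobiusEquiv ρ ρ') (h4 : FourVis ρ)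
    (hb : ∀ z z' : Z, ρ z z' ≤ 1) (hb' : ∀ z z' : Z, ρ' z z' ≤ 1) {z x y : Z}
    (h : VisTriple ρ z x y) : mderiv ρ ρ' z = Rquot ρ ρ' z x y := by
  have hex : ∃ p : Z × Z, VisTriple ρ z p.1 p.2 := ⟨(x, y), h⟩
  rw [mderiv, dif_pos hex]
  exact Rquot_indep hρ hρ' hm h4 hb hb' hex.choose_spec h

/-- The geometric mean value theorem, for a visible pair. -/
theorem mderiv_mul (hρ : Kernel ρ) (hρ' : Kernel ρ') (hm : MobiusEquiv ρ ρ') (h4 : FourVis ρ)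
    (hb : ∀ z z' : Z, ρ z z' ≤ 1) (hb' : ∀ z z' : Z, ρ' z z' ≤ 1) {z z' : Z}
    (h : ρ z z' ≠ 0) : mderiv ρ ρ' z * mderiv ρ ρ' z' = ρ z z' ^ 2 / ρ' z z' ^ 2 := by
  have f : ∀ a b, ρ a b ≠ ⊤ := fun a b => ne_top_of_le_ne_top ENNReal.one_ne_top (hb a b)
  have f' : ∀ a b, ρ' a b ≠ ⊤ := fun a b => ne_top_of_le_ne_top ENNReal.one_ne_top (hb' a b)
  have g : ∀ {a b}, ρ a b ≠ 0 → ρ' a b ≠ 0 := fun h => mt (hm.1 _ _).2 h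
  obtain ⟨w, wz, wz', -⟩ := h4 z z' z' z'
  have zw : ρ z w ≠ 0 := by rwa [hρ.1]
  have zw' : ρ z' w ≠ 0 := by rwa [hρ.1]
  have h' : ρ z' z ≠ 0 := by rwa [hρ.1]
  have v : VisTriple ρ z z' w := ⟨h, zw, zw'⟩
  have v' : VisTriple ρ z' z w := ⟨h', zw', zw⟩
  rw [mderiv_eq hρ hρ' hm h4 hb hb' v, mderiv_eq hρ hρ' hm h4 hb hb' v',
    ← ENNReal.toReal_eq_toReal_iff'
      (ENNReal.mul_ne_top (Rquot_ne_top hm hb hb' v) (Rquot_ne_top hm hb hb' v'))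
      (ENNReal.div_ne_top (ENNReal.pow_ne_top (f _ _)) (pow_ne_zero _ (g h)))]
  simp only [Rquot, ENNReal.toReal_div, ENNReal.toReal_mul, ENNReal.toReal_pow]
  rw [hρ.1 z' z, hρ'.1 z' z]
  have := ENNReal.toReal_ne_zero.2 ⟨zw, f _ _⟩
  have := ENNReal.toReal_ne_zero.2 ⟨zw', f _ _⟩
  have := ENNReal.toReal_ne_zero.2 ⟨g zw, f' _ _⟩
  have := ENNReal.toReal_ne_zero.2 ⟨g zw', f' _ _⟩
  have := ENNReal.toReal_ne_zero.2 ⟨g h, f' _ _⟩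
  field_simp

/-- Near `z₀` the derivative is computed by a fixed auxiliary pair, as visibility is an open
condition. -/
theorem continuous_mderiv [TopologicalSpace Z] (hρ : Kernel ρ) (hρ' : Kernel ρ')
    (hm : MobiusEquiv ρ ρ') (h4 : FourVis ρ)
    (hc : Continuous (Function.uncurry ρ)) (hc' : Continuous (Function.uncurry ρ'))
    (hb : ∀ z z' : Z, ρ z z' ≤ 1) (hb' : ∀ z z' : Z, ρ' z z' ≤ 1)
    (hvis : ∀ z : Z, ∃ x y, VisTriple ρ z x y) : Continuous (mderiv ρ ρ') := by
  have f : ∀ a b, ρ a b ≠ ⊤ := fun a b => ne_top_of_le_ne_top ENNReal.one_ne_top (hb a b)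
  have f' : ∀ a b, ρ' a b ≠ ⊤ := fun a b => ne_top_of_le_ne_top ENNReal.one_ne_top (hb' a b)
  have g : ∀ {a b}, ρ a b ≠ 0 → ρ' a b ≠ 0 := fun h => mt (hm.1 _ _).2 h
  rw [continuous_iff_continuousAt]
  intro z₀
  obtain ⟨x, y, zx, zy, xy⟩ := hvis z₀
  have c : ∀ a, Tendsto (fun z => ρ z a) (𝓝 z₀) (𝓝 (ρ z₀ a)) := fun a =>
    (hc.comp (Continuous.prodMk_left a)).tendsto z₀
  have c' : ∀ a, Tendsto (fun z => ρ' z a) (𝓝 z₀) (𝓝 (ρ' z₀ a)) := fun a =>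
    (hc'.comp (Continuous.prodMk_left a)).tendsto z₀
  have ev : (fun z => Rquot ρ ρ' z x y) =ᶠ[𝓝 z₀] mderiv ρ ρ' := by
    filter_upwards [(c x).eventually_ne zx, (c y).eventually_ne zy] with z h1 h2
    exact (mderiv_eq hρ hρ' hm h4 hb hb' ⟨h1, h2, xy⟩).symm
  refine ContinuousAt.congr ?_ ev
  refine ENNReal.Tendsto.div ?_ (Or.inr ?_) ?_ (Or.inr ?_)
  · exact ENNReal.Tendsto.mul
      (ENNReal.Tendsto.mul (c x) (Or.inr (f _ _)) (c y) (Or.inr (f _ _)))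
      (Or.inr (f' _ _)) tendsto_const_nhds (Or.inr (ENNReal.mul_ne_top (f _ _) (f _ _)))
  · exact mul_ne_zero (mul_ne_zero xy (g zx)) (g zy)
  · exact ENNReal.Tendsto.mul
      (ENNReal.Tendsto.mul tendsto_const_nhds (Or.inr (f' _ _)) (c' x) (Or.inr (f _ _)))
      (Or.inr (f' _ _)) (c' y) (Or.inr (ENNReal.mul_ne_top (f _ _) (f' _ _)))
  · exact ENNReal.mul_ne_top (ENNReal.mul_ne_top (f _ _) (f _ _)) (f' _ _)

end Helpers

/-- If `Z` is compact, `ρ, ρ'` are continuous Möbius equivalent kernels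
bounded by `1`, `(Z,ρ)` satisfies (4v), and every point admits points at `ρ`-distance `1`
and `ρ'`-distance `1`, then `max_z (∂ρ/∂ρ')(z) · min_z (∂ρ/∂ρ')(z) = 1`. -/
theorem statement8 {Z : Type*} [TopologicalSpace Z] [CompactSpace Z] [Nonempty Z]
    (ρ ρ' : Z → Z → ℝ≥0∞) (hρ : Kernel ρ) (hρ' : Kernel ρ')
    (hm : MobiusEquiv ρ ρ') (h4 : FourVis ρ)
    (hc : Continuous (Function.uncurry ρ)) (hc' : Continuous (Function.uncurry ρ'))
    (hb : ∀ z z' : Z, ρ z z' ≤ 1) (hb' : ∀ z z' : Z, ρ' z z' ≤ 1)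
    (hone : ∀ z : Z, ∃ zb : Z, ρ z zb = 1) (hone' : ∀ z : Z, ∃ zb' : Z, ρ' z zb' = 1) :
    (⨆ z : Z, mderiv ρ ρ' z) * (⨅ z : Z, mderiv ρ ρ' z) = 1 := by
  have nz : ∀ {a b}, ρ a b = 1 → ρ a b ≠ 0 := fun h => by rw [h]; exact one_ne_zero
  have hvis : ∀ z : Z, ∃ x y, VisTriple ρ z x y := fun z => by
    obtain ⟨x, hx⟩ := hone z
    obtain ⟨w, wz, wx, -⟩ := h4 z x x x
    exact ⟨x, w, nz hx, by rwa [hρ.1], by rwa [hρ.1]⟩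
  have hcont := continuous_mderiv hρ hρ' hm h4 hc hc' hb hb' hvis
  have hfin : ∀ z, mderiv ρ ρ' z ≠ ⊤ := fun z => by
    obtain ⟨x, y, h⟩ := hvis z
    rw [mderiv_eq hρ hρ' hm h4 hb hb' h]
    exact Rquot_ne_top hm hb hb' h
  have hsup : (⨆ z : Z, mderiv ρ ρ' z) ≠ ⊤ := by
    obtain ⟨z, -, hz⟩ := isCompact_univ.exists_isMaxOn univ_nonempty hcont.continuousOn
    exact ne_top_of_le_ne_top (hfin z) (iSup_le fun y => hz (mem_univ y))
  have hle : ∀ z, mderiv ρ ρ' z * (⨅ y : Z, mderiv ρ ρ' y) ≤ 1 := fun z => by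
    obtain ⟨y, hy⟩ := hone' z
    have hzy : ρ z y ≠ 0 := mt (hm.1 _ _).1 (by rw [hy]; exact one_ne_zero)
    calc _ ≤ mderiv ρ ρ' z * mderiv ρ ρ' y := by gcongr; exact iInf_le _ y
      _ = ρ z y ^ 2 := by rw [mderiv_mul hρ hρ' hm h4 hb hb' hzy, hy]; simp
      _ ≤ 1 := pow_le_one₀ zero_le (hb z y)
  have hge : ∀ z, 1 ≤ (⨆ y : Z, mderiv ρ ρ' y) * mderiv ρ ρ' z := fun z => by
    obtain ⟨y, hy⟩ := hone z
    calc 1 ≤ (ρ' z y ^ 2)⁻¹ := ENNReal.one_le_inv.2 (pow_le_one₀ zero_le (hb' z y))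
      _ = mderiv ρ ρ' y * mderiv ρ ρ' z := by
        rw [mul_comm, mderiv_mul hρ hρ' hm h4 hb hb' (nz hy), hy]; simp
      _ ≤ _ := by gcongr; exact le_iSup _ y
  apply le_antisymm
  · rw [ENNReal.iSup_mul]
    exact iSup_le hle
  · -- With `sup D = ∞` and `inf D = 0` the product would be `∞ * 0 = 0` in `ℝ≥0∞`, so the
    -- factor pulled into the infimum has to be finite.
    have hsup0 : (⨆ z : Z, mderiv ρ ρ' z) ≠ 0 := fun h0 => by
      have := hge (Classical.arbitrary Z)
      simp [h0] at this
    rw [ENNReal.mul_iInf_of_ne hsup0 hsup]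
    exact le_iInf hge

end Paper
end
end
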